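/- Let a, b, c, d, e, f ∈ ℝ and let D be the real 6×6 matrix with rows (0,−d,−e,b,c,0), (d,0,−f,−a,0,c), (e,f,0,0,−a,−b), (−b,a,0,0,−f,e), (−c,0,a,f,0,−d), (0,−c,b,−e,d,0). Set λ₁² = (a+f)² + (b−e)² + (c+d)² and λ₂² = (a−f)² + (b+e)² + (c−d)². Then the characteristic polynomial of D equals X²·(X² + λ₁²)·(X² + λ₂²); in particular the complex eigenvalues of D are 0 (with multiplicity two), ±i·λ₁ and ±i·λ₂. -/

import Mathlib

open Polynomial

/-!
The Hodge star on `𝔰𝔬(4) = Λ²ℝ⁴` commutes with `ad(X)`, and its `±1`-eigenspaces are the two ideals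
of `𝔰𝔬(4) ≅ 𝔰𝔬(3) ⊕ 𝔰𝔬(3)`. In the basis of self-dual vectors `e₁₂ + e₃₄`, `e₁₃ - e₂₄`, `e₁₄ + e₂₃`
and anti-self-dual vectors `e₁₂ - e₃₄`, `e₁₃ + e₂₄`, `e₁₄ - e₂₃` the matrix is therefore block
diagonal with two skew-symmetric `3 × 3` blocks. Each block has characteristic polynomial
`X (X² + λ²)`, where `λ²` is the sum of the squares of its entries above the diagonal
(`charpoly_skew`), and the characteristic polynomial of the whole is the product of the two.
-/

/-- The general real skew-symmetric `3 × 3` matrix. -/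
def skewThree (x y z : ℝ) : Matrix (Fin 3) (Fin 3) ℝ :=
  !![0, -x, -y; x, 0, -z; y, z, 0]

lemma charpoly_skew (x y z : ℝ) :
    (skewThree x y z).charpoly = X * (X ^ 2 + C (x ^ 2 + y ^ 2 + z ^ 2)) := by
  simp [skewThree, Matrix.charpoly, Matrix.charmatrix, Matrix.det_fin_three]
  ring

/-- The change of basis whose columns are the self-dual vectors `e₁₂ + e₃₄`, `e₁₃ - e₂₄`,
`e₁₄ + e₂₃`, followed by the anti-self-dual vectors `e₁₂ - e₃₄`, `e₁₃ + e₂₄`, `e₁₄ - e₂₃`. -/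
def dualBasis : Matrix (Fin 6) (Fin 6) ℝ :=
  !![1, 0, 0, 1, 0, 0;
     0, 1, 0, 0, 1, 0;
     0, 0, 1, 0, 0, 1;
     0, 0, 1, 0, 0, -1;
     0, -1, 0, 0, 1, 0;
     1, 0, 0, -1, 0, 0]

/-- The rows of `dualBasis` are orthogonal of squared length `2`. -/
lemma dualBasis_mul : dualBasis * ((1 / 2 : ℝ) • dualBasis.transpose) = 1 := by
  ext i j
  fin_cases i <;> fin_cases j <;>
    norm_num [dualBasis, Matrix.mul_apply, Fin.sum_univ_succ, Matrix.one_apply, Fin.ext_iff]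

/-- `dualBasis` as an invertible matrix. -/
noncomputable def dualBasisUnit : (Matrix (Fin 6) (Fin 6) ℝ)ˣ :=
  ⟨dualBasis, (1 / 2 : ℝ) • dualBasis.transpose, dualBasis_mul,
    mul_eq_one_comm.mp dualBasis_mul⟩

/-- The matrix of `ad(X)` in the basis `dualBasis`. -/
def blockForm (a b c d e f : ℝ) : Matrix (Fin 6) (Fin 6) ℝ :=
  Matrix.reindex finSumFinEquiv finSumFinEquiv
    (Matrix.fromBlocks (skewThree (c + d) (e - b) (a + f)) 0 0 (skewThree (d - c) (e + b) (f - a)))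

lemma blockForm_eq (a b c d e f : ℝ) : blockForm a b c d e f =
    !![0, -(c + d), -(e - b), 0, 0, 0;
       c + d, 0, -(a + f), 0, 0, 0;
       e - b, a + f, 0, 0, 0, 0;
       0, 0, 0, 0, -(d - c), -(e + b);
       0, 0, 0, d - c, 0, -(f - a);
       0, 0, 0, e + b, f - a, 0] := by
  ext i j
  fin_cases i <;> fin_cases j <;> rfl

/-- The characteristic polynomial of the matrix of the derivation `ad(X)` of `𝔰𝔬(4)`,
where `X = a·e₁₂ + b·e₁₃ + c·e₁₄ + d·e₂₃ + e·e₂₄ + f·e₃₄`, is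
`X² (X² + λ₁²)(X² + λ₂²)` with `λ₁² = (a+f)² + (b−e)² + (c+d)²` and
`λ₂² = (a−f)² + (b+e)² + (c−d)²`. -/
theorem so4_derivation_charpoly (a b c d e f : ℝ) :
    Matrix.charpoly
      (!![0, -d, -e, b, c, 0;
          d, 0, -f, -a, 0, c;
          e, f, 0, 0, -a, -b;
          -b, a, 0, 0, -f, e;
          -c, 0, a, f, 0, -d;
          0, -c, b, -e, d, 0] : Matrix (Fin 6) (Fin 6) ℝ)
      = X ^ 2 * (X ^ 2 + C ((a + f) ^ 2 + (b - e) ^ 2 + (c + d) ^ 2))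
          * (X ^ 2 + C ((a - f) ^ 2 + (b + e) ^ 2 + (c - d) ^ 2)) := by
  have hconj : (!![0, -d, -e, b, c, 0;
          d, 0, -f, -a, 0, c;
          e, f, 0, 0, -a, -b;
          -b, a, 0, 0, -f, e;
          -c, 0, a, f, 0, -d;
          0, -c, b, -e, d, 0] : Matrix (Fin 6) (Fin 6) ℝ)
      = dualBasisUnit.val * blockForm a b c d e f * dualBasisUnit⁻¹.val := by
    rw [Units.eq_mul_inv_iff_mul_eq, blockForm_eq]
    ext i j
    fin_cases i <;> fin_cases j <;>
      simp [dualBasisUnit, dualBasis, Matrix.mul_apply, Fin.sum_univ_succ] <;> ring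
  rw [hconj, Matrix.coe_units_inv, Matrix.charpoly_units_conj, blockForm, Matrix.charpoly_reindex,
    Matrix.charpoly_fromBlocks_zero₂₁, charpoly_skew, charpoly_skew]
  simp only [map_add, map_sub, map_pow]
  ring
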